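/- Let q be an odd prime power and f : F_{q^{s₁}} → F_q a quadratic form of rank R ≥ 3. For each a ∈ F_q*, there exists an F_q-subspace H of F_{q^{s₁}} of dimension s₁ - R + l₀, where l₀ = (R-1)/2 if R is odd and l₀ = R/2 if R is even, such that the restriction of f to H has rank 1 and sign η(a). -/

import Mathlib

open Module

/-- The radical of a quadratic form: the kernel of its polar bilinear form. -/
def qfRadical {F E : Type*} [Field F] [AddCommGroup E] [Module F E]
    (f : QuadraticForm F E) : Submodule F E :=
  LinearMap.ker (QuadraticMap.polarBilin f)

/-- `f` restricted to the subspace `H` (of dimension `r`) is a quadratic form of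
rank `R` and sign `ε`. -/
def HasRankSignOn {F E : Type*} [Field F] [Fintype F] [DecidableEq F]
    [AddCommGroup E] [Module F E] (f : QuadraticForm F E) (H : Submodule F E)
    (r R : ℕ) (ε : ℤ) : Prop :=
  ∃ (hRr : R ≤ r) (b : Basis (Fin r) F H) (lam : Fin R → F),
    (∀ i, lam i ≠ 0) ∧
    (∀ x : H, f (x : E) = ∑ i : Fin R, lam i * (b.repr x (Fin.castLE hRr i)) ^ 2) ∧
    ε = quadraticChar F (∏ i, lam i)

open QuadraticMap in
lemma aux_diag {F V : Type*} [Field F] [Fintype F] (hq : ringChar F ≠ 2)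
    [AddCommGroup V] [Module F V] [FiniteDimensional F V] (Q : QuadraticForm F V)
    (hnd : ∀ x, (∀ y, polar Q x y = 0) → x = 0) :
    ∃ v : Basis (Fin (finrank F V)) F V, (∀ i, Q (v i) ≠ 0) ∧
      ∀ i j, i ≠ j → polar Q (v i) (v j) = 0 := by
  have h2 : (2 : F) ≠ 0 := Ring.two_ne_zero hq
  let _ : Invertible (2 : F) := invertibleOfNonzero h2
  have hs : LinearMap.IsSymm (polarBilin Q) := ⟨fun x y => by
    simp only [polarBilin_apply_apply, RingHom.id_apply]; exact polar_comm _ _ _⟩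
  obtain ⟨v, hv⟩ := LinearMap.BilinForm.exists_orthogonal_basis hs
  have ho : ∀ i j, i ≠ j → polar Q (v i) (v j) = 0 := fun i j hij => by
    simpa using hv hij
  refine ⟨v, fun i hi => ?_, ho⟩
  apply v.ne_zero i
  apply hnd
  have : polarBilin Q (v i) = 0 := by
    apply v.ext
    intro j
    by_cases hij : i = j
    · subst hij
      simp [polar_self, hi]
    · simpa using ho i j hij
  intro y
  simpa using congrArg (fun g => g y) this

open Polynomial in
lemma aux_two {F : Type*} [Field F] [Fintype F] (hq : ringChar F ≠ 2)
    (d e a : F) (hd : d ≠ 0) (he : e ≠ 0) : ∃ x y : F, d * x ^ 2 + e * y ^ 2 = a := by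
  obtain ⟨x, y, h⟩ := FiniteField.exists_root_sum_quadratic (R := F)
    (f := C d * X ^ 2) (g := C e * X ^ 2 + C 0 * X + C (-a))
    (degree_C_mul_X_pow 2 hd) (degree_quadratic he)
    (FiniteField.odd_card_of_char_ne_two hq)
  refine ⟨x, y, ?_⟩
  simp at h
  linear_combination h

open QuadraticMap in
lemma aux_map2 {F V : Type*} [Field F] [AddCommGroup V] [Module F V] (Q : QuadraticForm F V)
    (u w : V) (h : polar Q u w = 0) (x y : F) :
    Q (x • u + y • w) = Q u * x ^ 2 + Q w * y ^ 2 := by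
  rw [QuadraticMap.map_add Q, QuadraticMap.map_smul, QuadraticMap.map_smul]
  simp [polar_smul_left, polar_smul_right, h]
  ring

open QuadraticMap in
lemma aux_repr {F V : Type*} [Field F] [Fintype F] (hq : ringChar F ≠ 2)
    [AddCommGroup V] [Module F V] [FiniteDimensional F V] (Q : QuadraticForm F V)
    (hnd : ∀ x, (∀ y, polar Q x y = 0) → x = 0) (hd : 2 ≤ finrank F V) (a : F) :
    ∃ v, Q v = a := by
  obtain ⟨v, h0, ho⟩ := aux_diag hq Q hnd
  obtain ⟨x, y, h⟩ := aux_two hq (Q (v ⟨0, by omega⟩)) (Q (v ⟨1, by omega⟩)) a (h0 _) (h0 _)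
  exact ⟨x • v ⟨0, by omega⟩ + y • v ⟨1, by omega⟩, by
    rw [aux_map2 Q _ _ (ho _ _ (by simp)), h]⟩

open QuadraticMap in
lemma aux_iso {F V : Type*} [Field F] [Fintype F] (hq : ringChar F ≠ 2)
    [AddCommGroup V] [Module F V] [FiniteDimensional F V] (Q : QuadraticForm F V)
    (hnd : ∀ x, (∀ y, polar Q x y = 0) → x = 0) (hd : 3 ≤ finrank F V) :
    ∃ v, v ≠ 0 ∧ Q v = 0 := by
  obtain ⟨v, h0, ho⟩ := aux_diag hq Q hnd
  obtain ⟨i, hi⟩ : ∃ i : Fin (finrank F V), i = ⟨0, by omega⟩ := ⟨_, rfl⟩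
  obtain ⟨j, hj⟩ : ∃ i : Fin (finrank F V), i = ⟨1, by omega⟩ := ⟨_, rfl⟩
  obtain ⟨k, hk⟩ : ∃ i : Fin (finrank F V), i = ⟨2, by omega⟩ := ⟨_, rfl⟩
  have hij : i ≠ j := by simp [hi, hj]
  have hik : i ≠ k := by simp [hi, hk]
  have hjk : j ≠ k := by simp [hj, hk]
  obtain ⟨x, y, h⟩ := aux_two hq (Q (v i)) (Q (v j)) (- Q (v k)) (h0 _) (h0 _)
  refine ⟨(x • v i + y • v j) + v k, ?_, ?_⟩
  · intro hz
    have := congrArg (fun z => v.repr z k) hz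
    simp [hik, hjk] at this
  · rw [QuadraticMap.map_add Q, aux_map2 Q _ _ (ho _ _ hij), h, polar_add_left,
      polar_smul_left, polar_smul_left, ho _ _ hik, ho _ _ hjk]
    simp

open QuadraticMap in
/-- Complement of a totally isotropic subspace in its orthogonal. -/
lemma aux_compl {F V : Type*} [Field F]
    [AddCommGroup V] [Module F V] [FiniteDimensional F V] (Q : QuadraticForm F V)
    (R : ℕ) (hrank : R + finrank F (qfRadical Q) = finrank F V)
    (W : Submodule F V) (hW : qfRadical Q ≤ W) (n : ℕ)
    (hn : finrank F W = finrank F (qfRadical Q) + n)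
    (hiso : ∀ x ∈ W, ∀ y ∈ W, polar Q x y = 0) :
    ∃ C : Submodule F V, finrank F C + 2 * n = R ∧ (∀ x ∈ C, x ∈ W → x = 0) ∧
      (∀ x ∈ C, ∀ y ∈ W, polar Q x y = 0) ∧
      (∀ x : C, (∀ y, polar (Q.comp C.subtype) x y = 0) → x = 0) := by
  have hs : LinearMap.IsSymm (polarBilin Q) := ⟨fun x y => by
    simp only [polarBilin_apply_apply, RingHom.id_apply]; exact polar_comm _ _ _⟩
  have hd : ∀ U : Submodule F V, qfRadical Q ≤ U →
      finrank F U + finrank F (LinearMap.BilinForm.orthogonal (polarBilin Q) U)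
        = finrank F V + finrank F (qfRadical Q) := by
    intro U hU
    rw [LinearMap.BilinForm.finrank_add_finrank_orthogonal']
    have : U ⊓ LinearMap.ker (polarBilin Q) = qfRadical Q := inf_eq_right.2 hU
    rw [this]
  set P := LinearMap.BilinForm.orthogonal (polarBilin Q) W with hP
  have hWP : W ≤ P := by
    intro x hx y hy
    exact hiso y hy x hx
  have hPP : LinearMap.BilinForm.orthogonal (polarBilin Q) P = W := by
    have h1 := hd W hW
    have h2 := hd P (hW.trans hWP)
    symm
    apply Submodule.eq_of_le_of_finrank_eq
    · exact LinearMap.BilinForm.le_orthogonal_orthogonal hs.isRefl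
    · rw [← hP] at h1
      omega
  obtain ⟨D, hD⟩ := Submodule.exists_isCompl W
  have hsup : W ⊔ (D ⊓ P) = P := by
    rw [← sup_inf_assoc_of_le D hWP, hD.sup_eq_top, top_inf_eq]
  have hinf : W ⊓ (D ⊓ P) = ⊥ := by
    rw [← inf_assoc, hD.inf_eq_bot, bot_inf_eq]
  have hdisj : ∀ x ∈ D ⊓ P, x ∈ W → x = 0 := by
    intro x hx hxW
    have : x ∈ W ⊓ (D ⊓ P) := ⟨hxW, hx⟩
    rwa [hinf, Submodule.mem_bot] at this
  have hCW : ∀ x ∈ D ⊓ P, ∀ y ∈ W, polar Q x y = 0 := by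
    intro x hx y hy
    rw [polar_comm]
    exact hx.2 y hy
  refine ⟨D ⊓ P, ?_, hdisj, hCW, ?_⟩
  · have h1 := hd W hW
    rw [← hP] at h1
    have h2 := Submodule.finrank_sup_add_finrank_inf_eq W (D ⊓ P)
    rw [hsup, hinf, finrank_bot] at h2
    omega
  · intro x hx
    apply Subtype.ext
    apply hdisj _ x.2
    rw [← hPP]
    intro p hp
    rw [← hsup] at hp
    obtain ⟨w, hw, c, hc, rfl⟩ := Submodule.mem_sup.1 hp
    have h1 : polar Q x c = 0 := hx ⟨c, hc⟩
    have h2 := hCW x x.2 w hw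
    show polar Q (w + c) x = 0
    rw [polar_comm, polar_add_right, h1, h2, add_zero]

open QuadraticMap in
lemma aux_tower {F V : Type*} [Field F] [Fintype F] (hq : ringChar F ≠ 2)
    [AddCommGroup V] [Module F V] [FiniteDimensional F V] (Q : QuadraticForm F V)
    (R : ℕ) (hrank : R + finrank F (qfRadical Q) = finrank F V) (n : ℕ) (hn : 2 * n + 1 ≤ R) :
    ∃ W : Submodule F V, qfRadical Q ≤ W ∧ finrank F W = finrank F (qfRadical Q) + n ∧
      (∀ x ∈ W, ∀ y ∈ W, polar Q x y = 0) := by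
  induction n with
  | zero =>
    refine ⟨qfRadical Q, le_rfl, rfl, fun x hx y _ => ?_⟩
    exact congrArg (fun g => g y) (LinearMap.mem_ker.1 hx)
  | succ n ih =>
    obtain ⟨W, h1, h2, h3⟩ := ih (by omega)
    obtain ⟨C, c1, c2, c3, c4⟩ := aux_compl Q R hrank W h1 n h2 h3
    obtain ⟨v, v0, hv⟩ := aux_iso hq (Q.comp C.subtype) c4 (by omega)
    have v0' : (v : V) ≠ 0 := fun h => v0 (Subtype.ext h)
    have hvv : polar Q (v : V) v = 0 := by
      rw [polar_self]
      have : Q (v : V) = 0 := hv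
      simp [this]
    have hvW : (v : V) ∉ W := fun h => v0' (c2 _ v.2 h)
    refine ⟨W ⊔ Submodule.span F {(v : V)}, h1.trans le_sup_left, ?_, ?_⟩
    · have h4 := Submodule.finrank_sup_add_finrank_inf_eq W (Submodule.span F {(v : V)})
      have h5 : W ⊓ Submodule.span F {(v : V)} = ⊥ := by
        rw [← disjoint_iff]
        exact (Submodule.disjoint_span_singleton' v0').2 hvW
      rw [h5, finrank_bot, finrank_span_singleton v0'] at h4
      omega
    · intro x hx y hy
      obtain ⟨w, hw, s, hs, rfl⟩ := Submodule.mem_sup.1 hx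
      obtain ⟨w', hw', s', hs', rfl⟩ := Submodule.mem_sup.1 hy
      obtain ⟨c, rfl⟩ := Submodule.mem_span_singleton.1 hs
      obtain ⟨c', rfl⟩ := Submodule.mem_span_singleton.1 hs'
      have e1 := c3 v v.2 w hw
      rw [polar_comm] at e1
      simp [polar_add_left, polar_add_right, polar_smul_left, polar_smul_right,
        h3 w hw w' hw', c3 v v.2 w' hw', e1, hvv]

open QuadraticMap in
lemma aux_final {F V : Type*} [Field F] [Fintype F] [DecidableEq F]
    (hq : ringChar F ≠ 2)
    [AddCommGroup V] [Module F V] [FiniteDimensional F V] (Q : QuadraticForm F V)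
    (W : Submodule F V) (k : ℕ) (hk : finrank F W = k)
    (hiso : ∀ x ∈ W, ∀ y ∈ W, polar Q x y = 0) (v : V) (a : F) (ha : a ≠ 0) (hv : Q v = a)
    (hvW : ∀ y ∈ W, polar Q v y = 0) :
    ∃ H : Submodule F V, finrank F H = k + 1 ∧
      HasRankSignOn Q H (k + 1) 1 (quadraticChar F a) := by
  have h2 : (2 : F) ≠ 0 := Ring.two_ne_zero hq
  have hQW : ∀ x ∈ W, Q x = 0 := by
    intro x hx
    have := hiso x hx x hx
    rw [polar_self] at this
    simpa [h2] using this
  let b : Basis (Fin k) F W := finBasisOfFinrankEq F W hk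
  obtain ⟨u, hu⟩ : ∃ u : Fin (k + 1) → V, u = Fin.cons v (W.subtype ∘ b) := ⟨_, rfl⟩
  have hu0 : u 0 = v := by simp [hu]
  have hus : ∀ i : Fin k, u i.succ = b i := by simp [hu]
  have hli : LinearIndependent F u := by
    rw [hu, linearIndependent_finCons]
    refine ⟨b.linearIndependent.map' W.subtype (Submodule.ker_subtype _), ?_⟩
    rw [Set.range_comp, Submodule.span_image, b.span_eq, Submodule.map_subtype_top]
    intro h
    exact ha (hv ▸ hQW v h)
  refine ⟨_, ?_, Nat.le_add_left 1 k, Basis.span hli, fun _ => a, fun _ => ha, ?_, by simp⟩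
  · rw [finrank_span_eq_card hli]; simp
  · intro x
    obtain ⟨c, hc⟩ : ∃ c, c = (Basis.span hli).repr x := ⟨_, rfl⟩
    have hx : (x : V) = c 0 • v + ∑ i : Fin k, c i.succ • (b i : V) := by
      conv_lhs => rw [← (Basis.span hli).sum_repr x, ← hc]
      rw [Fin.sum_univ_succ]
      simp [Basis.span_apply, hu0, hus]
    rw [← hc, hx]
    have hm : ∑ i : Fin k, c i.succ • (b i : V) ∈ W :=
      Submodule.sum_mem _ fun i _ => W.smul_mem _ (b i).2
    rw [QuadraticMap.map_add Q, QuadraticMap.map_smul, polar_smul_left, hvW _ hm, hQW _ hm, hv]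
    simp
    ring


/-- For a quadratic form `f` of rank `R ≥ 3` and each `a ∈ F_q*`,
there is a subspace `H` of dimension `s₁ - R + l₀` (with `l₀ = (R-1)/2` for `R`
odd, `l₀ = R/2` for `R` even) on which `f` restricts with rank `1` and sign
`η(a)`. -/
theorem stmt_14 (F : Type*) [Field F] [Fintype F] [DecidableEq F]
    (hq : ringChar F ≠ 2)
    (E₁ : Type*) [AddCommGroup E₁] [Module F E₁] [FiniteDimensional F E₁]
    (f : QuadraticForm F E₁) (R : ℕ)
    (hrank : R + finrank F (qfRadical f) = finrank F E₁)
    (hR3 : 3 ≤ R) (a : F) (ha : a ≠ 0) :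
    ∃ H : Submodule F E₁,
      finrank F H = finrank F E₁ - R + (if Odd R then (R - 1) / 2 else R / 2) ∧
      HasRankSignOn f H (finrank F E₁ - R + (if Odd R then (R - 1) / 2 else R / 2))
        1 (quadraticChar F a) := by
  have key : ∀ l : ℕ, 1 ≤ l → 2 * l ≤ R → ∃ H : Submodule F E₁,
      finrank F H = finrank F E₁ - R + l ∧
      HasRankSignOn f H (finrank F E₁ - R + l) 1 (quadraticChar F a) := by
    intro l hl hlR
    obtain ⟨n, rfl⟩ : ∃ n, l = n + 1 := ⟨l - 1, by omega⟩
    obtain ⟨W, h1, h2, h3⟩ := aux_tower hq f R hrank n (by omega)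
    obtain ⟨C, c1, c2, c3, c4⟩ := aux_compl f R hrank W h1 n h2 h3
    obtain ⟨v, hv⟩ := aux_repr hq (f.comp C.subtype) c4 (by omega) a
    have hk : finrank F W = finrank F E₁ - R + n := by omega
    exact aux_final hq f W _ hk h3 v a ha hv (c3 v v.2)
  split_ifs with h
  · exact key _ (by omega) (by omega)
  · exact key _ (by omega) (by omega)
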